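/- arXiv:2307.08400 — 3 statements merged into one kernel-verified Lean document; each statement's English description precedes it below -/
import Mathlib

section
/- Let G be a finitely generated group acting by isometries on each of finitely many δ-hyperbolic geodesic metric spaces X₁, …, X_l, such that the diagonal action on the product X with the ℓ¹-metric is metrically proper and has D-coarsely dense orbits. Then there is a constant C₁ = C₁(D, δ, l) > 0 such that for any finite subset S ⊆ G and any point o ∈ X one has λ(S, X) ≤ λ(S, G·o) ≤ C₁·λ(S, X) + C₁, where λ(S, G·o) = inf_{g∈G} max_{s∈S} d(g·o, s g·o). -/
open Pointwise

/-- A geodesic from `a` to `b`, parametrized by arc length on `[0, dist a b]`. -/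
def IsGeodesicSeg {X : Type*} [MetricSpace X] (γ : ℝ → X) (a b : X) : Prop :=
  γ 0 = a ∧ γ (dist a b) = b ∧
    ∀ s ∈ Set.Icc (0 : ℝ) (dist a b), ∀ t ∈ Set.Icc (0 : ℝ) (dist a b),
      dist (γ s) (γ t) = |s - t|

/-- A geodesic metric space: any two points are joined by a geodesic segment. -/
def GeodesicMetricSpace (X : Type*) [MetricSpace X] : Prop :=
  ∀ a b : X, ∃ γ : ℝ → X, IsGeodesicSeg γ a b

/-- `δ`-hyperbolicity via thin triangles: every side of a geodesic triangle is in the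
`δ`-neighbourhood of the union of the other two sides. -/
def DeltaHyperbolic (X : Type*) [MetricSpace X] (δ : ℝ) : Prop :=
  ∀ a b c : X, ∀ γ₁ γ₂ γ₃ : ℝ → X,
    IsGeodesicSeg γ₁ a b → IsGeodesicSeg γ₂ b c → IsGeodesicSeg γ₃ c a →
    ∀ t ∈ Set.Icc (0 : ℝ) (dist a b),
      (∃ u ∈ Set.Icc (0 : ℝ) (dist b c), dist (γ₁ t) (γ₂ u) ≤ δ) ∨
      (∃ u ∈ Set.Icc (0 : ℝ) (dist c a), dist (γ₁ t) (γ₃ u) ≤ δ)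

/-- The `ℓ¹`-metric on a finite product of metric spaces. -/
noncomputable def dL1 {l : ℕ} {X : Fin l → Type*} [∀ i, MetricSpace (X i)]
    (x y : ∀ i, X i) : ℝ :=
  ∑ i, dist (x i) (y i)

/-- Displacement `λ(S,x) = max_{s ∈ S} d(x, s·x)` of a finite set of group elements
at a point of a `G`-space. -/
noncomputable def dispAt (G : Type*) [Group G] (X : Type*) [MetricSpace X] [MulAction G X]
    (S : Finset G) (x : X) : ℝ :=
  sSup ((fun s : G => dist x (s • x)) '' (S : Set G))

/-- Displacement `λ(S,X) = inf_{x ∈ X} λ(S,x)` of a finite set of group elements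
on a `G`-space. -/
noncomputable def dispSpace (G : Type*) [Group G] (X : Type*) [MetricSpace X] [MulAction G X]
    (S : Finset G) : ℝ :=
  sInf (Set.range fun x : X => dispAt G X S x)

/-- Displacement `λ(S,x) = max_{s ∈ S} d(x, s·x)` at a point of the `ℓ¹`-product. -/
noncomputable def dispAtProd (G : Type*) [Group G] {l : ℕ} (X : Fin l → Type*)
    [∀ i, MetricSpace (X i)] [∀ i, MulAction G (X i)] (S : Finset G) (x : ∀ i, X i) : ℝ :=
  sSup ((fun s : G => dL1 x (fun i => s • x i)) '' (S : Set G))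

/-- Displacement `λ(S,X)` on the whole `ℓ¹`-product `X = X₁ × ⋯ × X_l`. -/
noncomputable def dispProd (G : Type*) [Group G] {l : ℕ} (X : Fin l → Type*)
    [∀ i, MetricSpace (X i)] [∀ i, MulAction G (X i)] (S : Finset G) : ℝ :=
  sInf (Set.range fun x : ∀ i, X i => dispAtProd G X S x)

/-- Displacement `λ(S, G·o) = inf_{g ∈ G} max_{s ∈ S} d(g·o, s·g·o)` on the orbit `G·o`
in the `ℓ¹`-product. -/
noncomputable def dispOrbit (G : Type*) [Group G] {l : ℕ} (X : Fin l → Type*)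
    [∀ i, MetricSpace (X i)] [∀ i, MulAction G (X i)] (S : Finset G) (o : ∀ i, X i) : ℝ :=
  sInf (Set.range fun g : G => dispAtProd G X S (fun i => g • o i))

/-- A finitely generated group `G` acting by isometries on each of `l` many `δ`-hyperbolic
geodesic metric spaces, such that the diagonal action on the `ℓ¹`-product is metrically
proper and has `D`-coarsely dense orbits. -/
structure ProperProductAction (D δ : ℝ) (l : ℕ) (G : Type*) [Group G]
    (X : Fin l → Type*) [∀ i, MetricSpace (X i)] [∀ i, MulAction G (X i)] : Prop where
  fg : Group.FG G
  geodesic : ∀ i, GeodesicMetricSpace (X i)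
  hyperbolic : ∀ i, DeltaHyperbolic (X i) δ
  isom : ∀ (i : Fin l) (g : G) (x y : X i), dist (g • x) (g • y) = dist x y
  proper : ∀ K : Set (∀ i, X i),
    (∃ C : ℝ, ∀ x ∈ K, ∀ y ∈ K, dL1 x y ≤ C) →
    {g : G | ∃ x ∈ K, (fun i => g • x i) ∈ K}.Finite
  denseOrbit : ∃ o : ∀ i, X i, ∀ x : ∀ i, X i, ∃ g : G, dL1 x (fun i => g • o i) ≤ D

/-!
By the triangle inequality, the displacement `x ↦ λ(S, x)` of a set of isometries is `2`-Lipschitz,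
so its infimum over an `R`-dense subset exceeds its infimum over the whole space by at most `2 R`.
If one orbit is `D`-dense, then every orbit is `2 D`-dense, because a group element carrying a
point of the dense orbit near `o` to one near `x` carries `o` to within `2 D` of `x`. Hence
`λ(S, G·o) ≤ λ(S, X) + 4 D`.
-/

section L1Metric

variable {l : ℕ} {X : Fin l → Type*} [∀ i, MetricSpace (X i)]

lemma dL1_nonneg (x y : ∀ i, X i) : 0 ≤ dL1 x y :=
  Finset.sum_nonneg fun _ _ => dist_nonneg

lemma dL1_comm (x y : ∀ i, X i) : dL1 x y = dL1 y x :=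
  Finset.sum_congr rfl fun _ _ => dist_comm _ _

lemma dL1_triangle (x y z : ∀ i, X i) : dL1 x z ≤ dL1 x y + dL1 y z := by
  unfold dL1
  rw [← Finset.sum_add_distrib]
  exact Finset.sum_le_sum fun i _ => dist_triangle (x i) (y i) (z i)

lemma dL1_smul_smul {M : Type*} [∀ i, SMul M (X i)] [∀ i, IsIsometricSMul M (X i)]
    (c : M) (x y : ∀ i, X i) : dL1 (c • x) (c • y) = dL1 x y :=
  Finset.sum_congr rfl fun i _ => dist_smul c (x i) (y i)

end L1Metric

section Displacement

variable {G : Type*} [Group G] {l : ℕ} {X : Fin l → Type*}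
  [∀ i, MetricSpace (X i)] [∀ i, MulAction G (X i)]

lemma dL1_smul_le_dispAtProd {S : Finset G} {s : G} (hs : s ∈ S) (x : ∀ i, X i) :
    dL1 x (s • x) ≤ dispAtProd G X S x :=
  le_csSup (S.finite_toSet.image _).bddAbove ⟨s, hs, rfl⟩

lemma dispAtProd_nonneg (S : Finset G) (x : ∀ i, X i) : 0 ≤ dispAtProd G X S x := by
  apply Real.sSup_nonneg
  rintro _ ⟨s, -, rfl⟩
  exact dL1_nonneg _ _

lemma dispProd_nonneg (S : Finset G) : 0 ≤ dispProd G X S :=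
  Real.iInf_nonneg fun x => dispAtProd_nonneg S x

lemma dispProd_le_dispAtProd (S : Finset G) (x : ∀ i, X i) :
    dispProd G X S ≤ dispAtProd G X S x :=
  ciInf_le ⟨0, Set.forall_mem_range.2 fun y => dispAtProd_nonneg S y⟩ x

lemma dispOrbit_le_dispAtProd (S : Finset G) (o : ∀ i, X i) (g : G) :
    dispOrbit G X S o ≤ dispAtProd G X S (g • o) :=
  ciInf_le ⟨0, Set.forall_mem_range.2 fun h => dispAtProd_nonneg S (h • o)⟩ g

lemma dispProd_le_dispOrbit (S : Finset G) (o : ∀ i, X i) :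
    dispProd G X S ≤ dispOrbit G X S o :=
  le_ciInf fun g => dispProd_le_dispAtProd S (g • o)

lemma dispAtProd_le_add_two_mul_dL1 [∀ i, IsIsometricSMul G (X i)] {S : Finset G}
    (hS : S.Nonempty) (x y : ∀ i, X i) :
    dispAtProd G X S y ≤ dispAtProd G X S x + 2 * dL1 x y := by
  apply csSup_le ((Finset.coe_nonempty.2 hS).image _)
  rintro _ ⟨s, hs, rfl⟩
  calc dL1 y (s • y)
      ≤ dL1 y x + dL1 x (s • y) := dL1_triangle _ _ _
    _ ≤ dL1 y x + (dL1 x (s • x) + dL1 (s • x) (s • y)) := by gcongr; exact dL1_triangle _ _ _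
    _ = dL1 x (s • x) + 2 * dL1 x y := by rw [dL1_smul_smul, dL1_comm y x]; ring
    _ ≤ dispAtProd G X S x + 2 * dL1 x y := by gcongr; exact dL1_smul_le_dispAtProd hs x

end Displacement

section CoarselyDenseOrbit

variable {G : Type*} [Group G] {l : ℕ} {X : Fin l → Type*}
  [∀ i, MetricSpace (X i)] [∀ i, MulAction G (X i)]

variable (G) in
/-- The orbit `G·o` is `R`-coarsely dense for the `ℓ¹`-metric: every point of the product lies
within distance `R` of it. -/
def CoarselyDenseOrbit (R : ℝ) (o : ∀ i, X i) : Prop :=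
  ∀ x : ∀ i, X i, ∃ g : G, dL1 x (g • o) ≤ R

variable [∀ i, IsIsometricSMul G (X i)]

lemma CoarselyDenseOrbit.change_basepoint {R : ℝ} {p : ∀ i, X i}
    (hp : CoarselyDenseOrbit G R p) (o : ∀ i, X i) : CoarselyDenseOrbit G (2 * R) o := by
  intro x
  obtain ⟨a, hxa⟩ := hp x
  obtain ⟨b, hob⟩ := hp o
  refine ⟨a * b⁻¹, ?_⟩
  have translate : dL1 (a • p) ((a * b⁻¹) • o) = dL1 o (b • p) := by
    rw [dL1_comm, ← dL1_smul_smul (a * b⁻¹) o, smul_smul, inv_mul_cancel_right]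
  calc dL1 x ((a * b⁻¹) • o)
      ≤ dL1 x (a • p) + dL1 (a • p) ((a * b⁻¹) • o) := dL1_triangle _ _ _
    _ ≤ R + R := add_le_add hxa (translate.trans_le hob)
    _ = 2 * R := (two_mul R).symm

lemma CoarselyDenseOrbit.dispOrbit_le_dispProd_add {R : ℝ} {o : ∀ i, X i}
    (ho : CoarselyDenseOrbit G R o) {S : Finset G} (hS : S.Nonempty) :
    dispOrbit G X S o ≤ dispProd G X S + 2 * R := by
  have : Nonempty (∀ i, X i) := ⟨o⟩
  rw [← sub_le_iff_le_add]
  refine le_ciInf fun x => sub_le_iff_le_add.2 ?_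
  obtain ⟨g, hg⟩ := ho x
  calc dispOrbit G X S o
      ≤ dispAtProd G X S (g • o) := dispOrbit_le_dispAtProd S o g
    _ ≤ dispAtProd G X S x + 2 * dL1 x (g • o) := dispAtProd_le_add_two_mul_dL1 hS _ _
    _ ≤ dispAtProd G X S x + 2 * R := by gcongr

theorem statement3_general {D : ℝ} {p : ∀ i, X i} (hp : CoarselyDenseOrbit G D p)
    {S : Finset G} (hS : S.Nonempty) (o : ∀ i, X i) :
    dispProd G X S ≤ dispOrbit G X S o ∧ dispOrbit G X S o ≤ dispProd G X S + 4 * D := by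
  refine ⟨dispProd_le_dispOrbit S o, ?_⟩
  calc dispOrbit G X S o
      ≤ dispProd G X S + 2 * (2 * D) := (hp.change_basepoint o).dispOrbit_le_dispProd_add hS
    _ = dispProd G X S + 4 * D := by ring

end CoarselyDenseOrbit

/-- There is a constant `C₁ = C₁(D, δ, l) > 0` such that for any finite
nonempty subset `S` of a group `G` with a metrically proper diagonal action by isometries
on an `ℓ¹`-product of `l` many `δ`-hyperbolic geodesic spaces with `D`-coarsely dense
orbits, and any point `o` of the product, one has
`λ(S, X) ≤ λ(S, G·o) ≤ C₁·λ(S, X) + C₁`. -/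
theorem statement3 (D δ : ℝ) (hD : 0 < D) (hδ : 0 ≤ δ) (l : ℕ) (hl : 1 ≤ l) :
    ∃ C₁ : ℝ, 0 < C₁ ∧
      ∀ (G : Type) [Group G] (X : Fin l → Type)
        [∀ i, MetricSpace (X i)] [∀ i, MulAction G (X i)],
        ProperProductAction D δ l G X →
        ∀ S : Finset G, S.Nonempty → ∀ o : ∀ i, X i,
          dispProd G X S ≤ dispOrbit G X S o ∧
          dispOrbit G X S o ≤ C₁ * dispProd G X S + C₁ := by
  refine ⟨1 + 4 * D, by positivity, fun G _ X _ _ h S hS o => ?_⟩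
  have (i : Fin l) : IsIsometricSMul G (X i) := ⟨fun g => Isometry.of_dist_eq (h.isom i g)⟩
  obtain ⟨p, hp⟩ := h.denseOrbit
  obtain ⟨lower, upper⟩ := statement3_general hp hS o
  exact ⟨lower, by nlinarith [mul_nonneg hD.le (dispProd_nonneg (X := X) S)]⟩
end

section
/- Let X be a δ-hyperbolic geodesic metric space and let S be a finite nonempty set of isometries of X with λ(S, X) ≥ 30δ. Then the set S^{≤2} = S ∪ S·S contains a loxodromic isometry b with the following property: there is a constant c₀ > 0 depending only on δ such that for every point o ∈ X with |λ(S,o) − λ(S,X)| < δ one has d(o, b·o) ≥ λ(S, X) − 10δ, and the bi-infinite concatenation α = ⋃_{n∈ℤ} bⁿ[o, b·o] of translates of a geodesic [o, b·o] is a c₀-quasi-geodesic (hence a quasi-axis for b). -/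
open Pointwise

/-- Displacement `λ(S,x) = max_{s ∈ S} d(x, s·x)` of a finite set of isometries at `x`. -/
noncomputable def idispAt {X : Type*} [MetricSpace X] (S : Finset (X ≃ᵢ X)) (x : X) : ℝ :=
  sSup ((fun s : X ≃ᵢ X => dist x (s x)) '' (S : Set (X ≃ᵢ X)))

/-- Displacement `λ(S,X) = inf_{x ∈ X} λ(S,x)` of a finite set of isometries on `X`. -/
noncomputable def idispSpace {X : Type*} [MetricSpace X] (S : Finset (X ≃ᵢ X)) : ℝ :=
  sInf (Set.range fun x : X => idispAt S x)

/-- An isometry is loxodromic if its stable translation length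
`τ(b) = lim_n d(x, bⁿ·x)/n` is strictly positive. -/
def Loxodromic {X : Type*} [MetricSpace X] (b : X ≃ᵢ X) : Prop :=
  ∃ (x : X) (τ : ℝ), 0 < τ ∧
    Filter.Tendsto (fun n : ℕ => dist x ((b ^ n) x) / n) Filter.atTop (nhds τ)

/-- The bi-infinite concatenation `α = ⋃_{n ∈ ℤ} bⁿ[o, b·o]` of the `b`-translates of a
geodesic `γ` from `o` to `b·o`, parametrized by arc length. -/
noncomputable def axisPath {X : Type*} [MetricSpace X] (b : X ≃ᵢ X) (o : X) (γ : ℝ → X)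
    (t : ℝ) : X :=
  (b ^ ⌊t / dist o (b o)⌋)
    (γ (t - (⌊t / dist o (b o)⌋ : ℝ) * dist o (b o)))

/-- A path `α : ℝ → X` parametrized by arc length is a `c`-quasi-geodesic: the length
`|s - t|` of any subpath is at most `c · d(α s, α t) + c`. -/
def IsQuasiGeodesicParam {X : Type*} [MetricSpace X] (c : ℝ) (α : ℝ → X) : Prop :=
  ∀ s t : ℝ, |s - t| ≤ c * dist (α s) (α t) + c ∧ dist (α s) (α t) ≤ |s - t|

/-!
Let `λ = λ(S, X)`. Either some `s ∈ S` moves every point by at least `λ - 18δ`, and then `b = s²`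
works: thinness at the midpoint of `[x, s x]` shows that `[x, s x]` and `[s x, s² x]` hardly
backtrack. Or every element of `S` moves some point by less than `λ - 18δ`. Take `x` almost
minimizing `λ(S, ·)`, let `t ∈ S` realize `λ(S, x)` and let `y` be a point that `t` moves little, so
that both `t x` and `t⁻¹ x` lie in the direction of `y` as seen from `x`. Let `s ∈ S` realize the
displacement at the point `p ∈ [x, y]` with `d(x, p) = 5δ`. Moving from `x` to `p` does not reduce
the displacement of `s` much, so neither `s x` nor `s⁻¹ x` lies in the direction of `y`, and
`b = s t` works. In both cases consecutive Gromov products along `x, s x, st x, sts x, …` are small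
compared with the steps, so by hyperbolicity the distance from `x` grows linearly.
-/

section

variable {X : Type*} [MetricSpace X] {δ ε : ℝ}

/-! ### Gromov products -/

/-- The Gromov product `(x | y)_w`; the base point `w` is the first argument. -/
noncomputable def gromovProduct (w x y : X) : ℝ :=
  (dist w x + dist w y - dist x y) / 2

/-- Gromov's four-point condition, written as the inequality
`min (x | y)_w (y | z)_w ≤ (x | z)_w + ε`. Unlike `DeltaHyperbolic` it makes no reference to
geodesics. -/
def GromovHyperbolic (X : Type*) [MetricSpace X] (ε : ℝ) : Prop :=
  ∀ w x y z : X, min (gromovProduct w x y) (gromovProduct w y z) ≤ gromovProduct w x z + ε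

lemma gromovProduct_comm (w x y : X) : gromovProduct w x y = gromovProduct w y x := by
  rw [gromovProduct, gromovProduct, dist_comm x y, add_comm (dist w x)]

lemma gromovProduct_nonneg (w x y : X) : 0 ≤ gromovProduct w x y := by
  have := dist_triangle_left x y w
  unfold gromovProduct
  linarith

lemma gromovProduct_le_dist_left (w x y : X) : gromovProduct w x y ≤ dist w x := by
  have := dist_triangle w x y
  unfold gromovProduct
  linarith

lemma dist_eq_sub_two_mul_gromovProduct (w x y : X) :
    dist x y = dist w x + dist w y - 2 * gromovProduct w x y := by
  unfold gromovProduct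
  ring

lemma gromovProduct_add_gromovProduct (x y z : X) :
    gromovProduct x z y + gromovProduct y x z = dist x y := by
  unfold gromovProduct
  rw [dist_comm y x, dist_comm z y]
  ring

lemma gromovProduct_apply (g : X ≃ᵢ X) (w x y : X) :
    gromovProduct (g w) (g x) (g y) = gromovProduct w x y := by
  simp only [gromovProduct, g.dist_eq]

lemma dist_inv_apply (g : X ≃ᵢ X) (x y : X) : dist (g⁻¹ x) y = dist x (g y) := by
  rw [← g.dist_eq, IsometryEquiv.apply_inv_self]

lemma dist_self_inv_apply (g : X ≃ᵢ X) (x : X) : dist x (g⁻¹ x) = dist x (g x) := by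
  rw [dist_comm, dist_inv_apply]

/-! ### Thin triangles -/

namespace IsGeodesicSeg

variable {γ : ℝ → X} {a b : X} {r : ℝ}

lemma dist_left (hγ : IsGeodesicSeg γ a b) (hr : r ∈ Set.Icc 0 (dist a b)) :
    dist a (γ r) = r := by
  have := hγ.2.2 0 ⟨le_rfl, dist_nonneg⟩ r hr
  rwa [hγ.1, zero_sub, abs_neg, abs_of_nonneg hr.1] at this

lemma dist_right (hγ : IsGeodesicSeg γ a b) (hr : r ∈ Set.Icc 0 (dist a b)) :
    dist (γ r) b = dist a b - r := by
  have := hγ.2.2 r hr (dist a b) ⟨dist_nonneg, le_rfl⟩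
  rwa [hγ.2.1, abs_sub_comm, abs_of_nonneg (sub_nonneg.2 hr.2)] at this

lemma dist_add_dist_le_of_dist_le {p : X} (hγ : IsGeodesicSeg γ a b)
    (hr : r ∈ Set.Icc 0 (dist a b)) (hp : dist p (γ r) ≤ δ) :
    dist a p + dist p b ≤ dist a b + 2 * δ := by
  have hap := dist_triangle_right a p (γ r)
  have hpb := dist_triangle p (γ r) b
  rw [hγ.dist_left hr] at hap
  rw [hγ.dist_right hr] at hpb
  linarith

/-- Since `(γ r | b)_a = r`, this is the four-point condition for `a, γ r, b, q`, with the better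
constant `δ`. -/
lemma min_gromovProduct_le (hγ : IsGeodesicSeg γ a b) (hg : GeodesicMetricSpace X)
    (hh : DeltaHyperbolic X δ) (hr : r ∈ Set.Icc 0 (dist a b)) (q : X) :
    min r (gromovProduct a b q) ≤ gromovProduct a (γ r) q + δ := by
  obtain ⟨γbq, hbq⟩ := hg b q
  obtain ⟨γqa, hqa⟩ := hg q a
  have hleft := hγ.dist_left hr
  have hright := hγ.dist_right hr
  simp only [gromovProduct, hleft]
  rcases hh a b q γ γbq γqa hγ hbq hqa r hr with ⟨u, hu, hnear⟩ | ⟨u, hu, hnear⟩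
  · have := hbq.dist_add_dist_le_of_dist_le hu hnear
    rw [dist_comm b (γ r), hright] at this
    exact min_le_of_right_le (by linarith)
  · have := hqa.dist_add_dist_le_of_dist_le hu hnear
    rw [dist_comm q a, dist_comm q, dist_comm (γ r) a, hleft] at this
    exact min_le_of_left_le (by linarith)

end IsGeodesicSeg

/-- The point of `[x, z]` at distance `(y | z)_x` from `x` is within `(x | z)_y + 2δ` of `y`. -/
theorem DeltaHyperbolic.gromovHyperbolic (hg : GeodesicMetricSpace X)
    (hh : DeltaHyperbolic X δ) : GromovHyperbolic X (2 * δ) := by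
  intro w x y z
  obtain ⟨γ, hγ⟩ := hg x z
  have hr : gromovProduct x z y ∈ Set.Icc 0 (dist x z) :=
    ⟨gromovProduct_nonneg _ _ _, gromovProduct_le_dist_left _ _ _⟩
  have hy := hγ.min_gromovProduct_le hg hh hr y
  have hw := hγ.min_gromovProduct_le hg hh hr w
  have hxp := hγ.dist_left hr
  generalize γ (gromovProduct x z y) = p at hy hw hxp
  have htri := dist_triangle_left y w p
  rw [min_self] at hy
  rw [min_le_iff] at hw ⊢
  simp only [gromovProduct, dist_comm _ w, dist_comm z y] at *
  rcases hw with hw | hw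
  · right; linarith
  · left; linarith

/-! ### From local to global -/

theorem GromovHyperbolic.gromovProduct_le_of_local (hX : GromovHyperbolic X ε) (hε : 0 ≤ ε)
    {u : ℕ → X}
    (hu : ∀ n, gromovProduct (u (n + 1)) (u n) (u (n + 2)) +
      gromovProduct (u (n + 2)) (u (n + 1)) (u (n + 3)) + 2 * ε < dist (u (n + 1)) (u (n + 2)))
    (n : ℕ) :
    gromovProduct (u (n + 1)) (u 0) (u (n + 2)) ≤
      gromovProduct (u (n + 1)) (u n) (u (n + 2)) + ε := by
  induction n with
  | zero => simpa only [zero_add] using le_add_of_nonneg_right hε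
  | succ n ih =>
    have hsum := gromovProduct_add_gromovProduct (u (n + 1)) (u (n + 2)) (u 0)
    have hfar : gromovProduct (u (n + 2)) (u (n + 1)) (u (n + 3)) + ε <
        gromovProduct (u (n + 2)) (u (n + 1)) (u 0) := by linarith [hu n]
    exact (min_le_iff.1 (hX (u (n + 2)) (u (n + 1)) (u 0) (u (n + 3)))).resolve_left
      (not_le.2 hfar)

theorem GromovHyperbolic.dist_add_le_of_local (hX : GromovHyperbolic X ε) (hε : 0 ≤ ε)
    {u : ℕ → X}
    (hu : ∀ n, gromovProduct (u (n + 1)) (u n) (u (n + 2)) +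
      gromovProduct (u (n + 2)) (u (n + 1)) (u (n + 3)) + 2 * ε < dist (u (n + 1)) (u (n + 2)))
    (n : ℕ) :
    dist (u 0) (u (n + 1)) + dist (u (n + 1)) (u (n + 2)) ≤
      dist (u 0) (u (n + 2)) + 2 * gromovProduct (u (n + 1)) (u n) (u (n + 2)) + 2 * ε := by
  have hdist := dist_eq_sub_two_mul_gromovProduct (u (n + 1)) (u 0) (u (n + 2))
  rw [dist_comm (u (n + 1)) (u 0)] at hdist
  linarith [hX.gromovProduct_le_of_local hε hu n]

/-- The points `x, s x, st x, sts x, …`; those with even index form the orbit of `x` under `st`. -/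
def alternatingOrbit (s t : X ≃ᵢ X) (x : X) : ℕ → X
  | 0 => x
  | 1 => s x
  | n + 2 => (s * t) (alternatingOrbit s t x n)

section alternatingOrbit

variable (s t : X ≃ᵢ X) (x : X)

lemma alternatingOrbit_two_mul (k : ℕ) :
    alternatingOrbit s t x (2 * k) = ((s * t) ^ k) x := by
  induction k with
  | zero => rfl
  | succ k ih =>
    rw [Nat.mul_succ, alternatingOrbit, ih, pow_succ', IsometryEquiv.mul_apply _ (_ ^ k)]

lemma dist_alternatingOrbit (k : ℕ) :
    dist (alternatingOrbit s t x (2 * k)) (alternatingOrbit s t x (2 * k + 1)) = dist x (s x) ∧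
    dist (alternatingOrbit s t x (2 * k + 1)) (alternatingOrbit s t x (2 * k + 2)) =
      dist x (t x) := by
  induction k with
  | zero => simp [alternatingOrbit, s.dist_eq]
  | succ k ih => simpa only [Nat.mul_succ, alternatingOrbit, IsometryEquiv.dist_eq] using ih

lemma gromovProduct_alternatingOrbit (k : ℕ) :
    gromovProduct (alternatingOrbit s t x (2 * k + 1)) (alternatingOrbit s t x (2 * k))
      (alternatingOrbit s t x (2 * k + 2)) = gromovProduct x (s⁻¹ x) (t x) ∧
    gromovProduct (alternatingOrbit s t x (2 * k + 2)) (alternatingOrbit s t x (2 * k + 1))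
      (alternatingOrbit s t x (2 * k + 3)) = gromovProduct x (t⁻¹ x) (s x) := by
  induction k with
  | zero =>
    rw [← gromovProduct_apply s x, ← gromovProduct_apply (s * t) x (t⁻¹ x)]
    simp [alternatingOrbit]
  | succ k ih => simpa only [Nat.mul_succ, alternatingOrbit, gromovProduct_apply] using ih

end alternatingOrbit

theorem GromovHyperbolic.mul_le_dist_mul_pow_apply (hX : GromovHyperbolic X ε) (hε : 0 ≤ ε)
    {s t : X ≃ᵢ X} {x : X}
    (hs : gromovProduct x (s⁻¹ x) (t x) + gromovProduct x (t⁻¹ x) (s x) + 2 * ε < dist x (s x))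
    (ht : gromovProduct x (s⁻¹ x) (t x) + gromovProduct x (t⁻¹ x) (s x) + 2 * ε < dist x (t x))
    (k : ℕ) :
    k * (dist x (s x) + dist x (t x) -
        2 * (gromovProduct x (s⁻¹ x) (t x) + gromovProduct x (t⁻¹ x) (s x)) - 4 * ε) ≤
      dist x (((s * t) ^ k) x) := by
  have hproduct := gromovProduct_alternatingOrbit s t x
  have hdist := dist_alternatingOrbit s t x
  rw [← alternatingOrbit_two_mul]
  change _ ≤ dist (alternatingOrbit s t x 0) _
  generalize alternatingOrbit s t x = u at hproduct hdist ⊢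
  have hlocal (n : ℕ) : gromovProduct (u (n + 1)) (u n) (u (n + 2)) +
      gromovProduct (u (n + 2)) (u (n + 1)) (u (n + 3)) + 2 * ε <
        dist (u (n + 1)) (u (n + 2)) := by
    obtain ⟨k, rfl | rfl⟩ := n.even_or_odd'
    · linarith [hproduct k, hdist k]
    · have hproduct_next := hproduct (k + 1)
      have hdist_next := hdist (k + 1)
      rw [Nat.mul_succ] at hproduct_next hdist_next
      linarith [hproduct k]
  have hglobal := hX.dist_add_le_of_local hε hlocal
  have hodd : dist x (s x) + k * (dist x (s x) + dist x (t x) -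
      2 * (gromovProduct x (s⁻¹ x) (t x) + gromovProduct x (t⁻¹ x) (s x)) - 4 * ε) ≤
        dist (u 0) (u (2 * k + 1)) := by
    induction k with
    | zero => simpa using (hdist 0).1.ge
    | succ k ih =>
      have heven_step := hglobal (2 * k)
      have hodd_step := hglobal (2 * k + 1)
      have hdist_next := hdist (k + 1)
      rw [Nat.mul_succ] at hdist_next ⊢
      push_cast
      linarith [hproduct k, hdist k]
  linarith [dist_triangle (u 0) (u (2 * k)) (u (2 * k + 1)), hdist k]

/-! ### Translation lengths -/

section translation

variable {b : X ≃ᵢ X} {x : X} {T : ℝ}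

lemma dist_pow_apply_le (b : X ≃ᵢ X) (x : X) (n : ℕ) :
    dist x ((b ^ n) x) ≤ n * dist x (b x) := by
  induction n with
  | zero => simp
  | succ n ih =>
    have htri := dist_triangle x ((b ^ n) x) ((b ^ n) (b x))
    rw [(b ^ n).dist_eq] at htri
    rw [pow_succ, IsometryEquiv.mul_apply]
    push_cast
    linarith

lemma subadditive_dist_pow_apply (b : X ≃ᵢ X) (x : X) :
    Subadditive fun n : ℕ ↦ dist x ((b ^ n) x) := by
  intro m n
  have htri := dist_triangle x ((b ^ m) x) ((b ^ m) ((b ^ n) x))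
  rwa [(b ^ m).dist_eq, ← IsometryEquiv.mul_apply, ← pow_add] at htri

/-- The displacements of `bᵏⁿ` at `x` and `y` differ by a constant, hence so little, relative to
`k`, that a lower bound for the growth at `x` is one at `y`. -/
lemma mul_le_dist_pow_apply_of_mul_le (h : ∀ n : ℕ, n * T ≤ dist x ((b ^ n) x)) (y : X)
    (n : ℕ) : n * T ≤ dist y ((b ^ n) y) := by
  by_contra! hlt
  obtain ⟨k, hk⟩ := exists_nat_gt (2 * dist x y / (n * T - dist y ((b ^ n) y)))
  rw [div_lt_iff₀ (sub_pos.2 hlt)] at hk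
  have hx := h (n * k)
  have hy := dist_pow_apply_le (b ^ n) y k
  rw [← pow_mul] at hy
  have htri := dist_triangle4 x y ((b ^ (n * k)) y) ((b ^ (n * k)) x)
  rw [(b ^ (n * k)).dist_eq, dist_comm y x] at htri
  push_cast at hx
  linarith

lemma loxodromic_of_mul_le_dist_pow_apply (hT : 0 < T)
    (h : ∀ n : ℕ, n * T ≤ dist x ((b ^ n) x)) : Loxodromic b := by
  have hsub := subadditive_dist_pow_apply b x
  have hbdd : BddBelow (Set.range fun n : ℕ ↦ dist x ((b ^ n) x) / n) :=
    ⟨0, by rintro _ ⟨n, rfl⟩; positivity⟩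
  refine ⟨x, hsub.lim, hT.trans_le ?_, hsub.tendsto_lim hbdd⟩
  refine ge_of_tendsto (hsub.tendsto_lim hbdd) ?_
  filter_upwards [Filter.eventually_gt_atTop 0] with n hn
  rw [le_div_iff₀ (by exact_mod_cast hn), mul_comm]
  exact h n

end translation

/-! ### Displacement of a finite set of isometries -/

section displacement

variable {S : Finset (X ≃ᵢ X)} {s : X ≃ᵢ X}

lemma dist_le_idispAt (hs : s ∈ S) (x : X) : dist x (s x) ≤ idispAt S x :=
  le_csSup (S.finite_toSet.image _).bddAbove ⟨s, hs, rfl⟩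

lemma exists_dist_eq_idispAt (hS : S.Nonempty) (x : X) : ∃ s ∈ S, dist x (s x) = idispAt S x :=
  (hS.to_set.image fun s : X ≃ᵢ X ↦ dist x (s x)).csSup_mem (S.finite_toSet.image _)

lemma idispAt_nonneg (S : Finset (X ≃ᵢ X)) (x : X) : 0 ≤ idispAt S x :=
  Real.sSup_nonneg (by rintro _ ⟨s, -, rfl⟩; exact dist_nonneg)

lemma idispSpace_le_idispAt (S : Finset (X ≃ᵢ X)) (x : X) : idispSpace S ≤ idispAt S x :=
  csInf_le ⟨0, by rintro _ ⟨y, rfl⟩; exact idispAt_nonneg S y⟩ ⟨x, rfl⟩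

lemma exists_idispAt_lt [Nonempty X] {r : ℝ} (hr : idispSpace S < r) : ∃ x, idispAt S x < r := by
  obtain ⟨_, ⟨x, rfl⟩, hx⟩ := exists_lt_of_csInf_lt (Set.range_nonempty (idispAt S)) hr
  exact ⟨x, hx⟩

lemma nonempty_of_idispSpace_pos (h : 0 < idispSpace S) : Nonempty X := by
  by_contra hX
  rw [not_nonempty_iff] at hX
  rw [idispSpace, Set.range_eq_empty, Real.sInf_empty] at h
  exact h.false

lemma dist_mul_apply_le (s t : X ≃ᵢ X) (x : X) :
    dist x ((s * t) x) ≤ dist x (s x) + dist x (t x) := by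
  have htri := dist_triangle x (s x) (s (t x))
  rwa [s.dist_eq] at htri

end displacement

/-! ### An element of large displacement, or two elements in general position -/

/-- Thinness is applied at the midpoint `m` of `[x, s x]`: since `s⁻¹ m` and `m` are far apart, `m`
is far from `s² x`. -/
lemma two_mul_gromovProduct_inv_le (hg : GeodesicMetricSpace X) (hh : DeltaHyperbolic X δ)
    (hδ : 0 ≤ δ) {s : X ≃ᵢ X} {K : ℝ} (hK : 4 * δ < K) (hs : ∀ y, K ≤ dist y (s y)) (x : X) :
    2 * gromovProduct x (s⁻¹ x) (s x) ≤ dist x (s x) - K + 4 * δ := by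
  obtain ⟨γ, hγ⟩ := hg x (s x)
  have hr : dist x (s x) / 2 ∈ Set.Icc 0 (dist x (s x)) :=
    ⟨by positivity, half_le_self dist_nonneg⟩
  have hleft := hγ.dist_left hr
  have hright := hγ.dist_right hr
  have hmin := hγ.min_gromovProduct_le hg hh hr
  generalize γ (dist x (s x) / 2) = m at hleft hright hmin
  have hdisp := hs m
  have hfar : K + dist x (s x) / 2 - 2 * δ ≤ dist m (s (s x)) := by
    have h := hmin (s⁻¹ m)
    simp only [gromovProduct, dist_comm _ (s⁻¹ m), dist_inv_apply] at h
    rcases min_le_iff.1 h with h | h <;> linarith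
  have h := hmin (s (s x))
  simp only [gromovProduct, dist_inv_apply, dist_self_inv_apply, s.dist_eq] at h ⊢
  rcases min_le_iff.1 h with h | h <;> linarith

lemma dist_sub_dist_le_two_mul_gromovProduct (g : X ≃ᵢ X) (x y : X) :
    dist x (g x) - dist y (g y) ≤ 2 * gromovProduct x (g x) y := by
  have htri := dist_triangle y (g y) (g x)
  rw [g.dist_eq] at htri
  simp only [gromovProduct, dist_comm (g x) y, dist_comm y x] at htri ⊢
  linarith

lemma dist_sub_dist_le_two_mul_gromovProduct_inv (g : X ≃ᵢ X) (x y : X) :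
    dist x (g x) - dist y (g y) ≤ 2 * gromovProduct x (g⁻¹ x) y := by
  simpa only [dist_self_inv_apply] using dist_sub_dist_le_two_mul_gromovProduct g⁻¹ x y

lemma GromovHyperbolic.dist_sub_dist_le_two_mul_gromovProduct_inv_self
    (hX : GromovHyperbolic X ε) (g : X ≃ᵢ X) (x z : X) :
    dist x (g x) - dist z (g z) ≤ 2 * gromovProduct x (g⁻¹ x) (g x) + 2 * ε := by
  have hinv := dist_sub_dist_le_two_mul_gromovProduct_inv g x z
  have hself := dist_sub_dist_le_two_mul_gromovProduct g x z
  rw [gromovProduct_comm] at hself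
  rcases min_le_iff.1 (hX x (g⁻¹ x) z (g x)) with h | h <;> linarith

lemma GromovHyperbolic.gromovProduct_add_gromovProduct_inv_le (hX : GromovHyperbolic X ε)
    {g : X ≃ᵢ X} {x p : X} (hfar : 2 * dist x p + 2 * ε < dist x (g x) + dist p (g p)) :
    2 * (gromovProduct x p (g x) + gromovProduct x p (g⁻¹ x)) ≤
      2 * dist x p + dist x (g x) - dist p (g p) + 2 * ε := by
  have h := hX x p (g x) (g p)
  have hgp : dist p (g⁻¹ x) = dist x (g p) := by rw [dist_comm, dist_inv_apply]
  simp only [gromovProduct, g.dist_eq, dist_self_inv_apply, hgp] at h ⊢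
  rcases min_le_iff.1 h with h | h <;> linarith

/-- Along `[x, y]` the displacement of `s` drops for as long as `[x, y]` fellow-travels both
`[x, s x]` and `[x, s⁻¹ x]`. -/
lemma IsGeodesicSeg.min_add_min_le {γ : ℝ → X} {x y : X} {r : ℝ} (hγ : IsGeodesicSeg γ x y)
    (hg : GeodesicMetricSpace X) (hh : DeltaHyperbolic X δ) (hr : r ∈ Set.Icc 0 (dist x y))
    {s : X ≃ᵢ X} (hfar : 2 * r + 4 * δ < dist x (s x) + dist (γ r) (s (γ r))) :
    2 * (min r (gromovProduct x (s x) y) + min r (gromovProduct x (s⁻¹ x) y)) ≤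
      2 * r + dist x (s x) - dist (γ r) (s (γ r)) + 8 * δ := by
  have hsum := (hh.gromovHyperbolic hg).gromovProduct_add_gromovProduct_inv_le (g := s) (x := x)
    (p := γ r) (by rw [hγ.dist_left hr]; linarith)
  have hs := hγ.min_gromovProduct_le hg hh hr (s x)
  have hinv := hγ.min_gromovProduct_le hg hh hr (s⁻¹ x)
  rw [gromovProduct_comm] at hs hinv
  rw [hγ.dist_left hr] at hsum
  linarith

/-- By `hp` at most one of `(s x | y)_x` and `(s⁻¹ x | y)_x` exceeds `5δ`; by `hs` the points `s x`
and `s⁻¹ x` are in the same direction from `x`, so the larger product is then at most `2δ` more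
than the smaller one. -/
lemma GromovHyperbolic.gromovProduct_lt_and_lt_and_add_le (hX : GromovHyperbolic X (2 * δ))
    (hδ : 0 < δ) {s : X ≃ᵢ X} {x y : X} {L : ℝ} (hL : dist x (s x) < L + δ)
    (hs : dist x (s x) - L + 14 * δ < 2 * gromovProduct x (s⁻¹ x) (s x))
    (hp : 2 * (min (5 * δ) (gromovProduct x (s x) y) + min (5 * δ) (gromovProduct x (s⁻¹ x) y)) ≤
      dist x (s x) - L + 18 * δ) :
    2 * gromovProduct x (s x) y < 13 * δ ∧ 2 * gromovProduct x (s⁻¹ x) y < 13 * δ ∧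
      2 * (gromovProduct x (s x) y + gromovProduct x (s⁻¹ x) y) ≤ dist x (s x) - L + 21 * δ := by
  have hinv := hX x (s⁻¹ x) (s x) y
  have hself := hX x (s x) (s⁻¹ x) y
  rw [gromovProduct_comm x (s x) (s⁻¹ x)] at hself
  generalize gromovProduct x (s x) y = α at *
  generalize gromovProduct x (s⁻¹ x) y = β at *
  rcases le_total (5 * δ) α with hα | hα <;> rcases le_total (5 * δ) β with hβ | hβ <;>
    simp only [min_eq_left, min_eq_right, hα, hβ] at hp
  · linarith
  · have hle : α ≤ β + 2 * δ := (min_le_iff.1 hinv).resolve_left (by linarith)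
    exact ⟨by linarith, by linarith, by linarith⟩
  · have hle : β ≤ α + 2 * δ := (min_le_iff.1 hself).resolve_left (by linarith)
    exact ⟨by linarith, by linarith, by linarith⟩
  · exact ⟨by linarith, by linarith, by linarith⟩

lemma GromovHyperbolic.gromovProduct_inv_le_and_le (hX : GromovHyperbolic X (2 * δ))
    (hδ : 0 < δ) {s t : X ≃ᵢ X} {x y : X} (ht : dist y (t y) + 18 * δ ≤ dist x (t x))
    (hs : 2 * gromovProduct x (s x) y < 13 * δ) (hs_inv : 2 * gromovProduct x (s⁻¹ x) y < 13 * δ) :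
    gromovProduct x (t⁻¹ x) (s x) ≤ gromovProduct x (s x) y + 2 * δ ∧
      gromovProduct x (s⁻¹ x) (t x) ≤ gromovProduct x (s⁻¹ x) y + 2 * δ := by
  have ht_toward := dist_sub_dist_le_two_mul_gromovProduct t x y
  have ht_inv_toward := dist_sub_dist_le_two_mul_gromovProduct_inv t x y
  rw [gromovProduct_comm x (t⁻¹ x) (s x)]
  exact ⟨(min_le_iff.1 (hX x (s x) (t⁻¹ x) y)).resolve_right (by linarith),
    (min_le_iff.1 (hX x (s⁻¹ x) (t x) y)).resolve_right (by linarith)⟩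

lemma GromovHyperbolic.mul_le_dist_mul_pow_apply_of_min_add_min_le
    (hX : GromovHyperbolic X (2 * δ)) (hδ : 0 < δ) {s t : X ≃ᵢ X} {x y : X} {L : ℝ}
    (hL : 30 * δ ≤ L) (ht : L ≤ dist x (t x)) (hty : dist y (t y) + 18 * δ ≤ dist x (t x))
    (hsx : dist x (s x) < L + δ)
    (hs : dist x (s x) - L + 14 * δ < 2 * gromovProduct x (s⁻¹ x) (s x))
    (hp : 2 * (min (5 * δ) (gromovProduct x (s x) y) + min (5 * δ) (gromovProduct x (s⁻¹ x) y)) ≤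
      dist x (s x) - L + 18 * δ) (n : ℕ) :
    n * (2 * L - 37 * δ) ≤ dist x (((s * t) ^ n) x) := by
  obtain ⟨hlt, hlt_inv, hadd⟩ := hX.gromovProduct_lt_and_lt_and_add_le hδ hsx hs hp
  obtain ⟨hts, hst⟩ := hX.gromovProduct_inv_le_and_le hδ hty hlt hlt_inv
  have hnonneg := gromovProduct_nonneg x (s x) y
  have hnonneg_inv := gromovProduct_nonneg x (s⁻¹ x) y
  refine le_trans ?_ (hX.mul_le_dist_mul_pow_apply (by linarith) (s := s) (t := t) (x := x)
    (by linarith) (by linarith) n)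
  exact mul_le_mul_of_nonneg_left (by linarith) n.cast_nonneg

lemma exists_mul_le_dist_mul_pow_apply_of_small (hδ : 0 < δ) (hg : GeodesicMetricSpace X)
    (hh : DeltaHyperbolic X δ) {S : Finset (X ≃ᵢ X)} (hS : S.Nonempty)
    (hL : 30 * δ ≤ idispSpace S)
    (hsmall : ∀ s ∈ S, ∃ y, dist y (s y) < idispSpace S - 18 * δ)
    {x : X} (hx : idispAt S x < idispSpace S + δ) :
    ∃ s ∈ S, ∃ t ∈ S, ∀ n : ℕ, n * (2 * idispSpace S - 37 * δ) ≤ dist x (((s * t) ^ n) x) := by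
  have hX := hh.gromovHyperbolic hg
  obtain ⟨t, htS, ht⟩ := exists_dist_eq_idispAt hS x
  obtain ⟨y, hy⟩ := hsmall t htS
  have htx := ht ▸ idispSpace_le_idispAt S x
  have htoward := dist_sub_dist_le_two_mul_gromovProduct t x y
  have hxy := gromovProduct_le_dist_left x y (t x)
  rw [gromovProduct_comm] at hxy
  have hr : 5 * δ ∈ Set.Icc 0 (dist x y) := ⟨by linarith, by linarith⟩
  obtain ⟨γ, hγ⟩ := hg x y
  obtain ⟨s, hsS, hsp⟩ := exists_dist_eq_idispAt hS (γ (5 * δ))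
  obtain ⟨z, hz⟩ := hsmall s hsS
  have hpL := hsp ▸ idispSpace_le_idispAt S (γ (5 * δ))
  have hsx := dist_le_idispAt hsS x
  have hsz := hX.dist_sub_dist_le_two_mul_gromovProduct_inv_self s x z
  have hdrop := hγ.min_add_min_le hg hh hr (s := s)
    (by linarith [dist_nonneg (x := x) (y := s x)])
  exact ⟨s, hsS, t, htS, hX.mul_le_dist_mul_pow_apply_of_min_add_min_le hδ hL htx
    (by linarith) (by linarith) (by linarith) (by linarith)⟩

lemma mul_le_dist_mul_self_pow_apply (hδ : 0 ≤ δ) (hg : GeodesicMetricSpace X)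
    (hh : DeltaHyperbolic X δ) {s : X ≃ᵢ X} {K : ℝ} (hK : 8 * δ < K) (hs : ∀ y, K ≤ dist y (s y))
    (x : X) (n : ℕ) : n * (2 * K - 16 * δ) ≤ dist x (((s * s) ^ n) x) := by
  have hproduct := two_mul_gromovProduct_inv_le hg hh hδ (by linarith) hs x
  refine le_trans ?_ ((hh.gromovHyperbolic hg).mul_le_dist_mul_pow_apply (by linarith)
    (s := s) (t := s) (x := x) (by linarith) (by linarith) n)
  exact mul_le_mul_of_nonneg_left (by linarith) n.cast_nonneg

lemma add_sub_le_dist_mul_self_apply (hδ : 0 ≤ δ) (hg : GeodesicMetricSpace X)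
    (hh : DeltaHyperbolic X δ) {s : X ≃ᵢ X} {K : ℝ} (hK : 4 * δ < K) (hs : ∀ y, K ≤ dist y (s y))
    (x : X) : dist x (s x) + K - 4 * δ ≤ dist x ((s * s) x) := by
  have hproduct := two_mul_gromovProduct_inv_le hg hh hδ hK hs x
  have hdist := dist_eq_sub_two_mul_gromovProduct x (s⁻¹ x) (s x)
  rw [dist_inv_apply, dist_self_inv_apply] at hdist
  rw [IsometryEquiv.mul_apply]
  linarith

theorem exists_mul_le_dist_mul_pow_apply (hδ : 0 < δ) (hg : GeodesicMetricSpace X)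
    (hh : DeltaHyperbolic X δ) {S : Finset (X ≃ᵢ X)} (hS : S.Nonempty)
    (hL : 30 * δ ≤ idispSpace S) :
    ∃ s ∈ S, ∃ t ∈ S, (∀ y, idispSpace S - 10 * δ ≤ dist y ((s * t) y)) ∧
      ∀ y, ∀ n : ℕ, n * (2 * idispSpace S - 52 * δ) ≤ dist y (((s * t) ^ n) y) := by
  by_cases! hlarge : ∃ s ∈ S, ∀ y, idispSpace S - 18 * δ ≤ dist y (s y)
  · obtain ⟨s, hsS, hs⟩ := hlarge
    refine ⟨s, hsS, s, hsS, fun y ↦ ?_, fun y n ↦ ?_⟩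
    · linarith [add_sub_le_dist_mul_self_apply hδ.le hg hh (by linarith) hs y, hs y]
    · refine le_trans ?_ (mul_le_dist_mul_self_pow_apply hδ.le hg hh (by linarith) hs y n)
      exact mul_le_mul_of_nonneg_left (by linarith) n.cast_nonneg
  · have := nonempty_of_idispSpace_pos (show 0 < idispSpace S by linarith)
    obtain ⟨x, hx⟩ := exists_idispAt_lt (show idispSpace S < idispSpace S + δ by linarith)
    obtain ⟨s, hsS, t, htS, hst⟩ :=
      exists_mul_le_dist_mul_pow_apply_of_small hδ hg hh hS hL hlarge hx
    have hgrowth := mul_le_dist_pow_apply_of_mul_le hst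
    refine ⟨s, hsS, t, htS, fun y ↦ ?_, fun y n ↦ le_trans ?_ (hgrowth y n)⟩
    · have hone := hgrowth y 1
      rw [Nat.cast_one, one_mul, pow_one] at hone
      linarith
    · exact mul_le_mul_of_nonneg_left (by linarith) n.cast_nonneg

/-! ### The quasi-axis -/

section axisPath

variable {b : X ≃ᵢ X} {o : X} {γ : ℝ → X}

lemma axisPath_add_nat_mul (γ : ℝ → X) (hb : 0 < dist o (b o)) (t : ℝ) (n : ℕ) :
    axisPath b o γ (t + n * dist o (b o)) = (b ^ n) (axisPath b o γ t) := by
  have hfloor : ⌊(t + n * dist o (b o)) / dist o (b o)⌋ = n + ⌊t / dist o (b o)⌋ := by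
    rw [add_div, mul_div_cancel_right₀ _ hb.ne', Int.floor_add_natCast, add_comm]
  rw [axisPath, axisPath, hfloor, zpow_add, zpow_natCast, IsometryEquiv.mul_apply]
  push_cast
  ring_nf

lemma axisPath_eq_of_mem_Icc (hγ : IsGeodesicSeg γ o (b o)) (hb : 0 < dist o (b o)) {i : ℤ} {t : ℝ}
    (ht : t ∈ Set.Icc (i * dist o (b o)) ((i + 1) * dist o (b o))) :
    axisPath b o γ t = (b ^ i) (γ (t - i * dist o (b o))) := by
  obtain ⟨hleft, hright⟩ := ht
  rcases hright.lt_or_eq with hlt | rfl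
  · have hfloor : ⌊t / dist o (b o)⌋ = i :=
      Int.floor_eq_iff.2 ⟨(le_div_iff₀ hb).2 hleft, (div_lt_iff₀ hb).2 hlt⟩
    rw [axisPath, hfloor]
  · have hfloor : ⌊(i + 1) * dist o (b o) / dist o (b o)⌋ = i + 1 := by
      rw [mul_div_cancel_right₀ _ hb.ne']
      exact_mod_cast Int.floor_intCast (i + 1)
    rw [axisPath, hfloor, zpow_add_one, IsometryEquiv.mul_apply]
    push_cast
    rw [sub_self, hγ.1, ← sub_mul, add_sub_cancel_left, one_mul, hγ.2.1]

lemma dist_axisPath_of_mem_Icc (hγ : IsGeodesicSeg γ o (b o)) (hb : 0 < dist o (b o)) {i : ℤ}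
    {s t : ℝ} (hs : s ∈ Set.Icc (i * dist o (b o)) ((i + 1) * dist o (b o)))
    (ht : t ∈ Set.Icc (i * dist o (b o)) ((i + 1) * dist o (b o))) :
    dist (axisPath b o γ s) (axisPath b o γ t) = |s - t| := by
  rw [axisPath_eq_of_mem_Icc hγ hb hs, axisPath_eq_of_mem_Icc hγ hb ht, (b ^ i).dist_eq,
    hγ.2.2 _ ⟨by linarith [hs.1], by linarith [hs.2]⟩ _ ⟨by linarith [ht.1], by linarith [ht.2]⟩,
    sub_sub_sub_cancel_right]

lemma dist_axisPath_le_of_mem_Icc_add (hγ : IsGeodesicSeg γ o (b o)) (hb : 0 < dist o (b o))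
    {i : ℤ} {s : ℝ} (hs : s ∈ Set.Icc (i * dist o (b o)) ((i + 1) * dist o (b o))) (n : ℕ) {t : ℝ}
    (ht : t ∈ Set.Icc ((i + n) * dist o (b o)) ((i + n + 1) * dist o (b o))) :
    dist (axisPath b o γ s) (axisPath b o γ t) ≤ |s - t| := by
  induction n generalizing t with
  | zero => exact (dist_axisPath_of_mem_Icc hγ hb hs (by simpa using ht)).le
  | succ n ih =>
    push_cast at ht
    have hn : 0 ≤ n * dist o (b o) := by positivity
    have hst : s ≤ (i + n + 1) * dist o (b o) := by linarith [hs.2]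
    have htri := dist_triangle (axisPath b o γ s) (axisPath b o γ ((i + n + 1) * dist o (b o)))
      (axisPath b o γ t)
    have hfirst := ih (t := (i + n + 1) * dist o (b o)) ⟨by linarith, le_rfl⟩
    have hlast := dist_axisPath_of_mem_Icc hγ hb (i := i + n + 1)
      (s := (i + n + 1) * dist o (b o)) (t := t) (by push_cast; constructor <;> linarith)
      (by push_cast; constructor <;> linarith [ht.1, ht.2])
    rw [abs_sub_comm, abs_of_nonneg (by linarith)] at hfirst
    rw [abs_sub_comm, abs_of_nonneg (by linarith [ht.1])] at hlast
    rw [abs_sub_comm, abs_of_nonneg (by linarith [ht.1])]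
    linarith

theorem dist_axisPath_le (hγ : IsGeodesicSeg γ o (b o)) (hb : 0 < dist o (b o)) (s t : ℝ) :
    dist (axisPath b o γ s) (axisPath b o γ t) ≤ |s - t| := by
  wlog hst : s ≤ t generalizing s t
  · rw [dist_comm, abs_sub_comm]
    exact this t s (le_of_not_ge hst)
  have hcell (u : ℝ) : u ∈ Set.Icc (⌊u / dist o (b o)⌋ * dist o (b o))
      ((⌊u / dist o (b o)⌋ + 1) * dist o (b o)) :=
    ⟨(le_div_iff₀ hb).1 (Int.floor_le _), (div_le_iff₀ hb).1 (Int.lt_floor_add_one _).le⟩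
  obtain ⟨n, hn⟩ := Int.le.dest (Int.floor_le_floor (div_le_div_of_nonneg_right hst hb.le))
  refine dist_axisPath_le_of_mem_Icc_add hγ hb (hcell s) n ?_
  have ht := hcell t
  rw [← hn] at ht
  exact_mod_cast ht

end axisPath

section periodic

variable {b : X ≃ᵢ X} {α : ℝ → X} {l T c : ℝ}

lemma sub_mul_le_of_periodic (hl : 0 < l) (hα : ∀ s t, dist (α s) (α t) ≤ |s - t|)
    (hper : ∀ t, ∀ n : ℕ, α (t + n * l) = (b ^ n) (α t))
    (hb : ∀ y, ∀ n : ℕ, n * T ≤ dist y ((b ^ n) y)) {s t : ℝ} (hst : s ≤ t) :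
    (t - s) * T ≤ l * dist (α s) (α t) + l * (l - T) := by
  have hTl : T ≤ l := by
    have h := (hb (α 0) 1).trans_eq (by rw [← hper 0 1])
    simpa [abs_of_pos hl] using h.trans (hα _ _)
  have hn := Nat.le_ceil ((t - s) / l)
  have hn_lt := Nat.ceil_lt_add_one (div_nonneg (sub_nonneg.2 hst) hl.le)
  generalize ⌈(t - s) / l⌉₊ = n at hn hn_lt
  rw [div_le_iff₀ hl] at hn
  rw [← sub_lt_iff_lt_add, lt_div_iff₀ hl] at hn_lt
  have hlow := hb (α s) n
  have hrest := hα t (s + n * l)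
  rw [abs_sub_comm, abs_of_nonneg (by linarith)] at hrest
  rw [← hper] at hlow
  have htri := dist_triangle (α s) (α t) (α (s + n * l))
  have hdist : t - s - n * (l - T) ≤ dist (α s) (α t) := by linarith
  calc (t - s) * T ≤ l * (t - s - n * (l - T)) + l * (l - T) := by
        nlinarith [mul_le_mul_of_nonneg_right hn_lt.le (sub_nonneg.2 hTl)]
    _ ≤ l * dist (α s) (α t) + l * (l - T) := by gcongr

theorem isQuasiGeodesicParam_of_periodic (hl : 0 < l) (hT : 0 < T)
    (hα : ∀ s t, dist (α s) (α t) ≤ |s - t|)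
    (hper : ∀ t, ∀ n : ℕ, α (t + n * l) = (b ^ n) (α t))
    (hb : ∀ y, ∀ n : ℕ, n * T ≤ dist y ((b ^ n) y)) (hlc : l ≤ c * T)
    (hlTc : l * (l - T) ≤ c * T) : IsQuasiGeodesicParam c α := by
  refine fun s t ↦ ⟨?_, hα s t⟩
  wlog hst : s ≤ t generalizing s t
  · rw [dist_comm, abs_sub_comm]
    exact this t s (le_of_not_ge hst)
  rw [abs_sub_comm, abs_of_nonneg (sub_nonneg.2 hst)]
  refine le_of_mul_le_mul_right ?_ hT
  calc (t - s) * T ≤ l * dist (α s) (α t) + l * (l - T) :=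
        sub_mul_le_of_periodic hl hα hper hb hst
    _ ≤ c * T * dist (α s) (α t) + c * T := by gcongr
    _ = (c * dist (α s) (α t) + c) * T := by ring

end periodic

end

/-- Let `X` be `δ`-hyperbolic geodesic and `S` a finite nonempty set of
isometries with `λ(S, X) ≥ 30δ`. Then `S^{≤2} = S ∪ S·S` contains a loxodromic isometry
`b` such that, for a constant `c₀ > 0` depending only on `δ`, for every `o ∈ X` with
`|λ(S,o) − λ(S,X)| < δ` one has `d(o, b·o) ≥ λ(S,X) − 10δ` and the bi-infinite
concatenation `α = ⋃_{n∈ℤ} bⁿ[o, b·o]` of translates of a geodesic `[o, b·o]` is a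
`c₀`-quasi-geodesic (a quasi-axis for `b`). -/
theorem statement6 (δ : ℝ) (hδ : 0 < δ) :
    ∃ c₀ : ℝ, 0 < c₀ ∧
      ∀ (X : Type*) [MetricSpace X], GeodesicMetricSpace X → DeltaHyperbolic X δ →
        ∀ S : Finset (X ≃ᵢ X), S.Nonempty → 30 * δ ≤ idispSpace S →
          ∃ b : X ≃ᵢ X, (b ∈ S ∨ ∃ s ∈ S, ∃ t ∈ S, b = s * t) ∧ Loxodromic b ∧
            ∀ o : X, |idispAt S o - idispSpace S| < δ →
              idispSpace S - 10 * δ ≤ dist o (b o) ∧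
              ∃ γ : ℝ → X, IsGeodesicSeg γ o (b o) ∧
                IsQuasiGeodesicParam c₀ (axisPath b o γ) := by
  refine ⟨8 + 432 * δ, by positivity, fun X _ hg hh S hS hL ↦ ?_⟩
  obtain ⟨s, hs, t, ht, hlarge, hgrowth⟩ := exists_mul_le_dist_mul_pow_apply hδ hg hh hS hL
  have hT : 0 < 2 * idispSpace S - 52 * δ := by linarith
  obtain ⟨x⟩ := nonempty_of_idispSpace_pos (show 0 < idispSpace S by linarith)
  refine ⟨s * t, .inr ⟨s, hs, t, ht, rfl⟩,
    loxodromic_of_mul_le_dist_pow_apply hT (hgrowth x), fun o ho ↦ ⟨hlarge o, ?_⟩⟩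
  obtain ⟨γ, hγ⟩ := hg o ((s * t) o)
  have hb : 0 < dist o ((s * t) o) := by linarith [hlarge o]
  have hlT : dist o ((s * t) o) - (2 * idispSpace S - 52 * δ) ≤ 54 * δ := by
    linarith [dist_mul_apply_le s t o, dist_le_idispAt hs o, dist_le_idispAt ht o,
      (abs_lt.1 ho).2]
  have hl : dist o ((s * t) o) ≤ 8 * (2 * idispSpace S - 52 * δ) := by linarith
  refine ⟨γ, hγ, isQuasiGeodesicParam_of_periodic hb hT (dist_axisPath_le hγ hb)
    (axisPath_add_nat_mul γ hb) hgrowth ?_ ?_⟩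
  · exact hl.trans (mul_le_mul_of_nonneg_right (by linarith) hT.le)
  · calc _ ≤ 8 * (2 * idispSpace S - 52 * δ) * (54 * δ) :=
          mul_le_mul hl hlT (sub_nonneg.2 (by simpa using hgrowth o 1)) (by linarith)
      _ = 432 * δ * (2 * idispSpace S - 52 * δ) := by ring
      _ ≤ _ := mul_le_mul_of_nonneg_right (by linarith) hT.le
end

section
/- Let G be a group generated as a semigroup by a finite set U, and let H be a subgroup of G of index d. Then there exists a finite subset W ⊆ U^{≤ (d!)²−d!+1} such that W generates H as a group and |W| ≥ |U|/d!. -/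
open Pointwise

/-- `U` generates the group `G` as a semigroup: every element of `G` is a product of
elements of `U` (no inverses allowed). -/
def SemigroupGenerates {G : Type*} [Group G] (U : Set G) : Prop :=
  ∀ g : G, ∃ n : ℕ, g ∈ U ^ n

/-- `U^{≤m} = ⋃_{i ≤ m} Uⁱ`: products of at most `m` elements of `U`. -/
def wordBall {G : Type*} [Group G] (U : Set G) (m : ℕ) : Set G :=
  {g : G | ∃ i ≤ m, g ∈ U ^ i}

/-!
A subset of the finite set `G ⧸ H` that every `u ∈ U` maps into itself is mapped onto itself, so it
is invariant under the group generated by `U`, and it is all of `G ⧸ H` unless it is empty. Hence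
the set of cosets reached from a given one by words of length at most `k` grows strictly with `k`
until it is everything, and words of length at most `d - 1` connect any two cosets.

Such words supply a right transversal `R ∋ 1` of `H` for Schreier's lemma. A Schreier generator
`r u r'⁻¹` is the quotient `(r u c) (r' c)⁻¹` of two positive words lying in `H`, where `c` has
length at most `d - 1` and `r' c ∈ H`, so the words of length at most `2 d - 1` lying in `H`
generate `H`. Finally `U ⊆ R⁻¹ (R U ∩ H)` gives `|U| ≤ d |R U ∩ H|`.
-/

section WordBall

variable {G : Type*} [Group G] {U : Set G} {m n : ℕ}

theorem one_mem_wordBall : 1 ∈ wordBall U n :=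
  ⟨0, n.zero_le, by rw [pow_zero, Set.mem_one]⟩

theorem wordBall_mono (h : m ≤ n) : wordBall U m ⊆ wordBall U n :=
  fun _ ⟨i, hi, hg⟩ ↦ ⟨i, hi.trans h, hg⟩

theorem insert_one_subset_wordBall_one : insert 1 U ⊆ wordBall U 1 :=
  Set.insert_subset one_mem_wordBall fun u hu ↦ ⟨1, le_rfl, by rwa [pow_one]⟩

theorem wordBall_mul_wordBall_subset : wordBall U m * wordBall U n ⊆ wordBall U (m + n) := by
  rintro _ ⟨a, ⟨i, hi, ha⟩, b, ⟨j, hj, hb⟩, rfl⟩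
  exact ⟨i + j, add_le_add hi hj, pow_add U i j ▸ Set.mul_mem_mul ha hb⟩

theorem finite_wordBall (hU : U.Finite) : (wordBall U n).Finite := by
  classical
  lift U to Finset G using hU
  have h_union : wordBall (U : Set G) n = ⋃ i ∈ Set.Iic n, ((U ^ i : Finset G) : Set G) := by
    ext g
    simp [wordBall]
  rw [h_union]
  exact (Set.finite_Iic n).biUnion fun i _ ↦ (U ^ i).finite_toSet

theorem SemigroupGenerates.closure_eq_top (hU : SemigroupGenerates U) :
    Subgroup.closure U = ⊤ := by
  refine (Subgroup.eq_top_iff' _).2 fun g ↦ ?_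
  obtain ⟨n, hn⟩ := hU g
  exact Submonoid.pow_subset (S := (Subgroup.closure U).toSubmonoid) Subgroup.subset_closure hn

end WordBall

section Action

variable {G X : Type*} [Group G] [MulAction G X] [MulAction.IsPretransitive G X] [Finite X]
  {U : Set G}

theorem eq_univ_of_forall_smul_set_subset (hU : Subgroup.closure U = ⊤) {S : Set X}
    (hS : S.Nonempty) (hUS : ∀ u ∈ U, u • S ⊆ S) : S = Set.univ := by
  have h_stab : MulAction.stabilizer G S = ⊤ := by
    rw [← top_le_iff, ← hU, Subgroup.closure_le]
    exact fun u hu ↦ (MulAction.mem_stabilizer_set_iff_smul_set_subset S.toFinite).2 (hUS u hu)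
  obtain ⟨x, hx⟩ := hS
  refine Set.eq_univ_of_forall fun y ↦ ?_
  obtain ⟨g, rfl⟩ := MulAction.exists_smul_eq G x y
  have hg : g ∈ MulAction.stabilizer G S := h_stab ▸ Subgroup.mem_top g
  exact (MulAction.mem_stabilizer_set.1 hg x).2 hx

theorem wordBall_smul_singleton_eq_univ_of_succ_subset (hU : Subgroup.closure U = ⊤) {x : X}
    {k : ℕ} (hk : wordBall U (k + 1) • ({x} : Set X) ⊆ wordBall U k • {x}) :
    wordBall U k • ({x} : Set X) = Set.univ := by
  refine eq_univ_of_forall_smul_set_subset hU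
    ⟨(1 : G) • x, Set.smul_mem_smul one_mem_wordBall rfl⟩ fun u hu ↦ ?_
  calc u • (wordBall U k • ({x} : Set X))
      ⊆ wordBall U 1 • (wordBall U k • {x}) :=
        Set.smul_set_subset_smul (insert_one_subset_wordBall_one (.inr hu))
    _ = (wordBall U 1 * wordBall U k) • {x} := smul_smul _ _ _
    _ ⊆ wordBall U (k + 1) • {x} :=
        Set.smul_subset_smul_right (add_comm 1 k ▸ wordBall_mul_wordBall_subset)
    _ ⊆ wordBall U k • {x} := hk

theorem lt_ncard_wordBall_smul_singleton (hU : Subgroup.closure U = ⊤) (x : X) {k : ℕ}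
    (hk : k < Nat.card X) : k < (wordBall U k • ({x} : Set X)).ncard := by
  induction k with
  | zero =>
    exact (Set.ncard_pos (Set.toFinite _)).2 ⟨(1 : G) • x, Set.smul_mem_smul one_mem_wordBall rfl⟩
  | succ k ih =>
    have h_mono : wordBall U k • ({x} : Set X) ⊆ wordBall U (k + 1) • {x} :=
      Set.smul_subset_smul_right (wordBall_mono k.le_succ)
    by_cases h_stable : wordBall U (k + 1) • ({x} : Set X) ⊆ wordBall U k • {x}
    · rw [h_mono.antisymm' h_stable, wordBall_smul_singleton_eq_univ_of_succ_subset hU h_stable,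
        Set.ncard_univ]
      exact hk
    · exact (Nat.succ_le_of_lt (ih (k.lt_succ_self.trans hk))).trans_lt
        (Set.ncard_lt_ncard ⟨h_mono, h_stable⟩ (Set.toFinite _))

theorem exists_mem_wordBall_smul_eq (hU : Subgroup.closure U = ⊤) (x y : X) :
    ∃ w ∈ wordBall U (Nat.card X - 1), w • x = y := by
  have h_card_pos : 0 < Nat.card X := Nat.card_pos_iff.2 ⟨⟨x⟩, ‹_›⟩
  have h_univ : wordBall U (Nat.card X - 1) • ({x} : Set X) = Set.univ := by
    refine Set.eq_of_subset_of_ncard_le (Set.subset_univ _) ?_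
    rw [Set.ncard_univ]
    exact Nat.le_of_pred_lt
      (lt_ncard_wordBall_smul_singleton hU x (Nat.sub_one_lt h_card_pos.ne'))
  have hy : y ∈ wordBall U (Nat.card X - 1) • ({x} : Set X) := h_univ ▸ Set.mem_univ y
  simpa [Set.mem_smul] using hy

end Action

section Transversal

variable {G : Type*} [Group G] {H : Subgroup G} {B C R U : Set G}

theorem exists_isComplement_subset_of_mul_eq_univ (hB : (H : Set G) * B = Set.univ)
    (h_one : 1 ∈ B) : ∃ R ⊆ B, Subgroup.IsComplement (H : Set G) R ∧ 1 ∈ R := by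
  let coset : G → Quotient (QuotientGroup.rightRel H) := Quotient.mk''
  obtain ⟨R, h_one_R, hRB, h_image, h_inj⟩ := (Set.injOn_singleton coset 1)
    |>.exists_subset_injOn_subset_range_eq (Set.singleton_subset_iff.2 h_one)
  refine ⟨R, hRB, Subgroup.isComplement_subgroup_left_iff_bijective.2
    ⟨h_inj.injective, fun q ↦ ?_⟩, h_one_R rfl⟩
  obtain ⟨g, rfl⟩ := Quotient.mk''_surjective q
  obtain ⟨h, hh, b, hb, rfl⟩ : g ∈ (H : Set G) * B := hB ▸ Set.mem_univ g
  obtain ⟨r, hr, hrb⟩ : coset b ∈ coset '' R := h_image ▸ Set.mem_image_of_mem coset hb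
  refine ⟨⟨r, hr⟩, hrb.trans (Quotient.eq''.2 (QuotientGroup.rightRel_apply.2 ?_))⟩
  simpa using hh

theorem mul_mul_inv_mem_closure_mul_insert_one_mul_inter (hC : C * (H : Set G) = Set.univ)
    {r u r' : G} (hr : r ∈ B) (hu : u ∈ U) (hr' : r' ∈ B) (h_mem : r * u * r'⁻¹ ∈ H) :
    r * u * r'⁻¹ ∈ Subgroup.closure (B * insert 1 U * C ∩ H) := by
  obtain ⟨c, hc, h, hh, hch⟩ : r'⁻¹ ∈ C * (H : Set G) := hC ▸ Set.mem_univ _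
  have h_return : r' * c ∈ H := by
    rw [← inv_inv r', ← hch]
    simpa using hh
  have h_positive : r * u * c ∈ H := by
    simpa [mul_assoc] using H.mul_mem h_mem h_return
  have h_split : r * u * r'⁻¹ = r * u * c * (r' * c)⁻¹ := by group
  rw [h_split]
  refine mul_mem (Subgroup.subset_closure ⟨?_, h_positive⟩)
    (inv_mem (Subgroup.subset_closure ⟨?_, h_return⟩))
  · exact Set.mul_mem_mul (Set.mul_mem_mul hr (.inr hu)) hc
  · exact Set.mul_mem_mul ⟨r', hr', 1, .inl rfl, mul_one r'⟩ hc

theorem closure_mul_insert_one_mul_inter_eq (hU : Subgroup.closure U = ⊤)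
    (hB : (H : Set G) * B = Set.univ) (h_one : 1 ∈ B) (hC : C * (H : Set G) = Set.univ) :
    Subgroup.closure (B * insert 1 U * C ∩ H) = H := by
  obtain ⟨R, hRB, hR, h_one_R⟩ := exists_isComplement_subset_of_mul_eq_univ hB h_one
  refine le_antisymm ((Subgroup.closure_le _).2 Set.inter_subset_right) ?_
  refine (Subgroup.closure_mul_image_eq hR h_one_R hU).ge.trans ((Subgroup.closure_le _).2 ?_)
  rintro _ ⟨_, ⟨r, hr, u, hu, rfl⟩, rfl⟩
  exact mul_mul_inv_mem_closure_mul_insert_one_mul_inter hC (hRB hr) hu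
    (hRB (hR.toRightFun (r * u)).2) (hR.mul_inv_toRightFun_mem (r * u))

theorem subset_inv_mul_mul_inter (hR : Subgroup.IsComplement (H : Set G) R) :
    U ⊆ R⁻¹ * (R * U ∩ H) := by
  intro u hu
  obtain ⟨h, hh, r, hr, hhr⟩ : u⁻¹ ∈ (H : Set G) * R := hR.mul_eq ▸ Set.mem_univ _
  have hru : r * u = h⁻¹ := by
    rw [← inv_inv u, ← hhr]
    group
  exact ⟨r⁻¹, Set.inv_mem_inv.2 hr, r * u, ⟨Set.mul_mem_mul hr hu, hru ▸ H.inv_mem hh⟩,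
    inv_mul_cancel_left r u⟩

theorem ncard_le_index_mul_ncard_mul_inter [H.FiniteIndex]
    (hR : Subgroup.IsComplement (H : Set G) R) (hU : U.Finite) :
    U.ncard ≤ H.index * (R * U ∩ H).ncard :=
  calc U.ncard ≤ (R⁻¹ * (R * U ∩ H)).ncard :=
        Set.ncard_le_ncard (subset_inv_mul_mul_inter hR)
          (hR.finite_right.inv.mul ((hR.finite_right.mul hU).inter_of_left _))
    _ ≤ R⁻¹.ncard * (R * U ∩ H).ncard := Set.natCard_mul_le
    _ = H.index * (R * U ∩ H).ncard := by rw [Set.ncard_inv, hR.ncard_right]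

end Transversal

section FiniteIndex

variable {G : Type*} [Group G] {U : Set G}

theorem wordBall_mul_subgroup_eq_univ (hU : Subgroup.closure U = ⊤) (H : Subgroup G)
    [H.FiniteIndex] : wordBall U (H.index - 1) * (H : Set G) = Set.univ := by
  refine Set.eq_univ_of_forall fun g ↦ ?_
  obtain ⟨w, hw, hwg⟩ := exists_mem_wordBall_smul_eq hU ((1 : G) : G ⧸ H) (g : G ⧸ H)
  rw [MulAction.Quotient.smul_coe, smul_eq_mul, mul_one, QuotientGroup.eq] at hwg
  exact ⟨w, hw, w⁻¹ * g, hwg, mul_inv_cancel_left w g⟩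

theorem subgroup_mul_wordBall_eq_univ (hU : Subgroup.closure U = ⊤) (H : Subgroup G)
    [H.FiniteIndex] : (H : Set G) * wordBall U (H.index - 1) = Set.univ := by
  refine Set.eq_univ_of_forall fun g ↦ ?_
  obtain ⟨w, hw, hwg⟩ := exists_mem_wordBall_smul_eq hU ((g⁻¹ : G) : G ⧸ H) ((1 : G) : G ⧸ H)
  rw [MulAction.Quotient.smul_coe, smul_eq_mul, QuotientGroup.eq, mul_one, mul_inv_rev,
    inv_inv] at hwg
  exact ⟨g * w⁻¹, hwg, w, hw, inv_mul_cancel_right g w⟩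

theorem closure_wordBall_inter_eq (hU : Subgroup.closure U = ⊤) (H : Subgroup G)
    [H.FiniteIndex] : Subgroup.closure (wordBall U (2 * H.index - 1) ∩ H) = H := by
  refine le_antisymm ((Subgroup.closure_le _).2 Set.inter_subset_right) ?_
  have h_length : H.index - 1 + 1 + (H.index - 1) = 2 * H.index - 1 := by
    have := Nat.pos_of_ne_zero H.index_ne_zero_of_finite
    omega
  have h_subset : wordBall U (H.index - 1) * insert 1 U * wordBall U (H.index - 1) ⊆
      wordBall U (2 * H.index - 1) :=
    calc wordBall U (H.index - 1) * insert 1 U * wordBall U (H.index - 1)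
        ⊆ wordBall U (H.index - 1) * wordBall U 1 * wordBall U (H.index - 1) := by
          gcongr
          exact insert_one_subset_wordBall_one
      _ ⊆ wordBall U (H.index - 1 + 1) * wordBall U (H.index - 1) := by
          gcongr
          exact wordBall_mul_wordBall_subset
      _ ⊆ wordBall U (2 * H.index - 1) := h_length ▸ wordBall_mul_wordBall_subset
  calc H = Subgroup.closure
          (wordBall U (H.index - 1) * insert 1 U * wordBall U (H.index - 1) ∩ H) :=
        (closure_mul_insert_one_mul_inter_eq hU (subgroup_mul_wordBall_eq_univ hU H)
          one_mem_wordBall (wordBall_mul_subgroup_eq_univ hU H)).symm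
    _ ≤ Subgroup.closure (wordBall U (2 * H.index - 1) ∩ H) :=
        Subgroup.closure_mono (Set.inter_subset_inter_left _ h_subset)

theorem ncard_le_index_mul_ncard_wordBall_inter (hU : Subgroup.closure U = ⊤)
    (hU_finite : U.Finite) (H : Subgroup G) [H.FiniteIndex] :
    U.ncard ≤ H.index * (wordBall U H.index ∩ H).ncard := by
  obtain ⟨R, hR_ball, hR, -⟩ := exists_isComplement_subset_of_mul_eq_univ
    (subgroup_mul_wordBall_eq_univ hU H) one_mem_wordBall
  have h_subset : R * U ⊆ wordBall U H.index :=
    calc R * U ⊆ wordBall U (H.index - 1) * wordBall U 1 :=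
          Set.mul_subset_mul hR_ball
            ((Set.subset_insert 1 U).trans insert_one_subset_wordBall_one)
      _ ⊆ wordBall U (H.index - 1 + 1) := wordBall_mul_wordBall_subset
      _ = wordBall U H.index := by rw [Nat.sub_one_add_one H.index_ne_zero_of_finite]
  calc U.ncard ≤ H.index * (R * U ∩ H).ncard := ncard_le_index_mul_ncard_mul_inter hR hU_finite
    _ ≤ H.index * (wordBall U H.index ∩ H).ncard :=
        Nat.mul_le_mul_left _ (Set.ncard_le_ncard (Set.inter_subset_inter_left _ h_subset)
          ((finite_wordBall hU_finite).inter_of_left _))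

end FiniteIndex

theorem two_mul_sub_one_le_factorial_sq_sub (d : ℕ) :
    2 * d - 1 ≤ d.factorial ^ 2 - d.factorial + 1 := by
  obtain ⟨e, he⟩ : ∃ e, d.factorial = e + 1 := Nat.exists_eq_add_one.2 d.factorial_pos
  have h_self : d ≤ e + 1 := he ▸ d.self_le_factorial
  have h_sub : (e + 1) ^ 2 - (e + 1) = e ^ 2 + e := Nat.sub_eq_of_eq_add (by ring)
  have h_sq : e ≤ e ^ 2 := Nat.le_self_pow two_ne_zero e
  rw [he, h_sub]
  omega

theorem statement13_general {G : Type*} [Group G] (U : Finset G)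
    (hU : Subgroup.closure (U : Set G) = ⊤) (H : Subgroup G) [H.FiniteIndex] :
    ∃ W : Finset G,
      (W : Set G) ⊆ wordBall (U : Set G) (2 * H.index - 1) ∧
      Subgroup.closure (W : Set G) = H ∧
      U.card ≤ H.index * W.card := by
  have h_finite : (wordBall (U : Set G) (2 * H.index - 1) ∩ H).Finite :=
    (finite_wordBall U.finite_toSet).inter_of_left _
  refine ⟨h_finite.toFinset, ?_, ?_, ?_⟩
  · exact h_finite.coe_toFinset.subset.trans Set.inter_subset_left
  · rw [h_finite.coe_toFinset, closure_wordBall_inter_eq hU H]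
  · have h_index : H.index ≤ 2 * H.index - 1 := by
      have := Nat.pos_of_ne_zero H.index_ne_zero_of_finite
      omega
    rw [← Set.ncard_coe_finset U, ← Set.ncard_eq_toFinset_card _ h_finite]
    refine (ncard_le_index_mul_ncard_wordBall_inter hU U.finite_toSet H).trans ?_
    gcongr
    exact wordBall_mono h_index

/-- Let `G` be a group generated as a semigroup by a finite set `U`, and
let `H` be a subgroup of index `d` in `G`. Then there is a finite
`W ⊆ U^{≤ (d!)²−d!+1}` generating `H` as a group with `|W| ≥ |U|/d!`. -/
theorem statement13 {G : Type*} [Group G] (U : Finset G)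
    (hU : SemigroupGenerates (U : Set G)) (H : Subgroup G)
    (d : ℕ) (hd : 0 < d) (hidx : H.index = d) :
    ∃ W : Finset G,
      (W : Set G) ⊆ wordBall (U : Set G) (d.factorial ^ 2 - d.factorial + 1) ∧
      Subgroup.closure (W : Set G) = H ∧
      (U.card : ℝ) / (d.factorial : ℝ) ≤ (W.card : ℝ) := by
  have : H.FiniteIndex := ⟨hidx ▸ hd.ne'⟩
  obtain ⟨W, hW_ball, hW_closure, hW_card⟩ := statement13_general U hU.closure_eq_top H
  rw [hidx] at hW_ball hW_card
  refine ⟨W, hW_ball.trans (wordBall_mono (two_mul_sub_one_le_factorial_sq_sub d)), hW_closure, ?_⟩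
  rw [div_le_iff₀' (by exact_mod_cast d.factorial_pos)]
  exact_mod_cast hW_card.trans (Nat.mul_le_mul_right _ d.self_le_factorial)
end
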